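/- arXiv:2207.02047 — 8 statements merged into one kernel-verified Lean document; each statement's English description precedes it below -/
import Mathlib

section
/- Let n ≥ 1 and let f = g + h in the polynomial ring ℂ[x₁,…,xₙ], where g is homogeneous of degree d for some d ≥ 3, the only common zero in ℂⁿ of the partial derivatives ∂g/∂x₁, …, ∂g/∂xₙ is the origin, h is homogeneous of degree d+1, and h does not belong to the Jacobian ideal Jac(g). Then the image of f in the formal power series ring ℂ[[x₁,…,xₙ]] does not belong to the ideal of ℂ[[x₁,…,xₙ]] generated by the images of ∂f/∂x₁, …, ∂f/∂xₙ. -/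
open MvPolynomial

lemma chain_rule_aux {n : ℕ} (y : Fin n → Polynomial ℂ) (p : MvPolynomial (Fin n) ℂ) :
    Polynomial.derivative (aeval y p) =
      ∑ i, aeval y (pderiv i p) * Polynomial.derivative (y i) := by
  induction p using MvPolynomial.induction_on with
  | C a => simp [← Polynomial.C_eq_algebraMap]
  | add p q hp hq => simp [hp, hq, add_mul, Finset.sum_add_distrib]
  | mul_X p j hp =>
    simp only [map_mul, aeval_X, Polynomial.derivative_mul, hp, Derivation.leibniz, smul_eq_mul,
      map_add, add_mul, Finset.sum_add_distrib, pderiv_X, Finset.sum_mul]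
    rw [add_comm]
    refine congrArg₂ (fun u v => u + v) ?_ ?_
    · rw [Finset.sum_eq_single j]
      · simp
      · intro b _ hb
        simp [Pi.single_apply, hb.symm]
      · simp
    · exact Finset.sum_congr rfl fun i _ => by ring

lemma monom_top_aux {n : ℕ} (y : Fin n → Polynomial ℂ) (k : ℕ)
    (hy : ∀ i, (y i).natDegree ≤ k) (m : Fin n →₀ ℕ) :
    (m.prod fun i e => y i ^ e).natDegree ≤ m.degree * k ∧
    (m.prod fun i e => y i ^ e).coeff (m.degree * k) =
      m.prod fun i e => (y i).coeff k ^ e := by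
  induction m using Finsupp.induction_linear with
  | zero => simp
  | add f g hf hg =>
    rw [Finsupp.prod_add_index' (by simp) (by intros; rw [pow_add]),
      Finsupp.prod_add_index' (by simp) (by intros; rw [pow_add]), map_add, add_mul]
    refine ⟨Polynomial.natDegree_mul_le_of_le hf.1 hg.1, ?_⟩
    rw [Polynomial.coeff_mul_add_eq_of_natDegree_le hf.1 hg.1, hf.2, hg.2]
  | single i e =>
    rw [Finsupp.prod_single_index (by simp), Finsupp.prod_single_index (by simp),
      Finsupp.degree_single]
    refine ⟨Polynomial.natDegree_pow_le_of_le _ (hy i), ?_⟩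
    rw [Polynomial.coeff_pow_of_natDegree_le (hy i)]

lemma aeval_top_aux {n : ℕ} (y : Fin n → Polynomial ℂ) (k e : ℕ)
    (hy : ∀ i, (y i).natDegree ≤ k) (p : MvPolynomial (Fin n) ℂ) (hp : p.IsHomogeneous e) :
    (aeval y p).coeff (e * k) = eval (fun i => (y i).coeff k) p := by
  rw [aeval_def, eval₂_eq', eval_eq', Polynomial.finsetSum_coeff]
  refine Finset.sum_congr rfl fun m hm => ?_
  have hme : m.degree = e := by
    by_contra hne
    exact mem_support_iff.1 hm (hp.coeff_eq_zero hne)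
  have := (monom_top_aux y k hy m).2
  rw [Finsupp.prod_fintype _ _ (by simp), Finsupp.prod_fintype _ _ (by simp), hme] at this
  rw [← Polynomial.C_eq_algebraMap, Polynomial.coeff_C_mul, this]

lemma pderiv_comm_aux {n : ℕ} (p : MvPolynomial (Fin n) ℂ) (i j : Fin n) :
    pderiv i (pderiv j p) = pderiv j (pderiv i p) := by
  let D : Fin n → Derivation ℂ (MvPolynomial (Fin n) ℂ) (MvPolynomial (Fin n) ℂ) :=
    fun i => pderiv i
  have : ⁅D i, D j⁆ = 0 := by
    apply MvPolynomial.derivation_ext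
    intro k
    simp [D, Derivation.commutator_apply, pderiv_X, Pi.single_apply, apply_ite]
  have := congrArg (fun D => D p) this
  simpa [D, Derivation.commutator_apply, sub_eq_zero] using this

lemma const_syz_aux {n d : ℕ} (hd : 3 ≤ d) (g : MvPolynomial (Fin n) ℂ)
    (hg : g.IsHomogeneous d)
    (hs : ∀ a : Fin n → ℂ, (∀ i : Fin n, eval a (pderiv i g) = 0) → a = 0)
    (c : Fin n → ℂ) (hc : ∑ i, C (c i) * pderiv i g = 0) : c = 0 := by
  apply hs
  intro j
  have h1 := congrArg (fun p => eval c (pderiv j p)) hc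
  have h2 := congrArg (eval c) (hg.pderiv (i := j)).sum_X_mul_pderiv
  simp only [map_sum, map_mul, eval_X, map_nsmul, pderiv_C_mul, eval_C, map_zero,
    pderiv_comm_aux g j] at h1 h2
  rw [h1] at h2
  have : d - 1 ≠ 0 := by omega
  simpa [this] using h2.symm

lemma lin_diff_aux {n : ℕ} (g : MvPolynomial (Fin n) ℂ) (A : Matrix (Fin n) (Fin n) ℂ)
    (hA : ∑ i, (∑ j, C (A i j) * X j) * pderiv i g = 0) (j : Fin n) :
    ∑ i, C (A i j) * pderiv i g + ∑ i, (∑ k, C (A i k) * X k) * pderiv i (pderiv j g) = 0 := by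
  have h1 := congrArg (pderiv j) hA
  simp only [map_sum, Derivation.leibniz, smul_eq_mul, map_zero, Finset.sum_add_distrib,
    pderiv_C, pderiv_X, mul_zero, add_zero] at h1
  rw [add_comm, ← h1]
  refine congrArg₂ (fun u v => u + v) ?_ ?_
  · exact Finset.sum_congr rfl fun i _ => by rw [pderiv_comm_aux]
  · refine Finset.sum_congr rfl fun i _ => ?_
    rw [mul_comm]
    refine congrArg₂ (fun u v => u * v) rfl ?_
    rw [Finset.sum_eq_single j]
    · simp
    · intro b _ hb
      simp [Pi.single_apply, hb.symm]
    · simp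

open Matrix in
lemma eig_aux {n d : ℕ} (g : MvPolynomial (Fin n) ℂ)
    (hg : g.IsHomogeneous d)
    (hs : ∀ a : Fin n → ℂ, (∀ i : Fin n, eval a (pderiv i g) = 0) → a = 0)
    (A : Matrix (Fin n) (Fin n) ℂ)
    (hA : ∑ i, (∑ j, C (A i j) * X j) * pderiv i g = 0) (μ : ℂ)
    (hμ : A.charpoly.IsRoot μ) : A.charpoly.IsRoot (-((d - 1 : ℕ) : ℂ) * μ) := by
  rw [Polynomial.IsRoot, Matrix.eval_charpoly, ← Matrix.exists_mulVec_eq_zero_iff] at hμ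
  obtain ⟨v, hv, hv'⟩ := hμ
  rw [← Matrix.charpoly_transpose, Polynomial.IsRoot, Matrix.eval_charpoly,
    ← Matrix.exists_mulVec_eq_zero_iff]
  refine ⟨fun i => eval v (pderiv i g), fun h => hv (hs v fun i => congrFun h i), ?_⟩
  have hv2 : ∀ i, ∑ k, A i k * v k = μ * v i := by
    intro i
    have := congrFun hv' i
    simp only [Matrix.sub_mulVec, Pi.sub_apply, Matrix.scalar_apply, Matrix.mulVec_diagonal,
      Pi.zero_apply, sub_eq_zero] at this
    exact this.symm
  ext j
  have h1 := congrArg (eval v) (lin_diff_aux g A hA j)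
  have h2 := congrArg (eval v) (hg.pderiv (i := j)).sum_X_mul_pderiv
  simp only [map_sum, map_mul, map_add, eval_X, map_nsmul, eval_C, map_zero, hv2, mul_assoc,
    ← Finset.mul_sum] at h1 h2
  rw [h2] at h1
  simp only [Matrix.sub_mulVec, Pi.sub_apply, Matrix.scalar_apply, Matrix.mulVec_diagonal,
      Pi.zero_apply, sub_eq_zero]
  simp only [Matrix.mulVec, dotProduct, Matrix.transpose_apply]
  rw [nsmul_eq_mul] at h1
  linear_combination -h1

lemma nilp_aux {n d : ℕ} (hd : 3 ≤ d) (g : MvPolynomial (Fin n) ℂ)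
    (hg : g.IsHomogeneous d)
    (hs : ∀ a : Fin n → ℂ, (∀ i : Fin n, eval a (pderiv i g) = 0) → a = 0)
    (A : Matrix (Fin n) (Fin n) ℂ)
    (hA : ∑ i, (∑ j, C (A i j) * X j) * pderiv i g = 0) : IsNilpotent A := by
  have h0 : ∀ μ ∈ A.charpoly.roots, μ = 0 := by
    intro μ hμ
    obtain ⟨ν, hν, hmax⟩ := Finset.exists_max_image A.charpoly.roots.toFinset (fun z => ‖z‖)
      ⟨μ, by simpa using hμ⟩
    rw [Multiset.mem_toFinset] at hν
    have hne := A.charpoly_monic.ne_zero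
    have h1 := hmax (-((d - 1 : ℕ) : ℂ) * ν) (by
      rw [Multiset.mem_toFinset, Polynomial.mem_roots hne]
      exact eig_aux g hg hs A hA ν ((Polynomial.mem_roots hne).1 hν))
    have h2 := hmax μ (by simpa using hμ)
    rw [norm_mul, norm_neg, Complex.norm_natCast] at h1
    have h3 : (2 : ℝ) ≤ ((d - 1 : ℕ) : ℝ) := by exact_mod_cast (by omega : 2 ≤ d - 1)
    have : ‖μ‖ ≤ 0 := by nlinarith [norm_nonneg ν]
    simpa using this
  have h1 := (IsAlgClosed.splits A.charpoly).eq_prod_roots_of_monic A.charpoly_monic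
  rw [Multiset.eq_replicate_of_mem h0] at h1
  have h2 := A.aeval_self_charpoly
  rw [h1] at h2
  refine ⟨A.charpoly.roots.card, ?_⟩
  simpa using h2

open Matrix in
lemma lin_syz_aux {n d : ℕ} (hd : 3 ≤ d) (g : MvPolynomial (Fin n) ℂ)
    (hg : g.IsHomogeneous d)
    (hs : ∀ a : Fin n → ℂ, (∀ i : Fin n, eval a (pderiv i g) = 0) → a = 0)
    (A : Matrix (Fin n) (Fin n) ℂ)
    (hA : ∑ i, (∑ j, C (A i j) * X j) * pderiv i g = 0) : A = 0 := by
  by_contra hA0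
  have hnil := nilp_aux hd g hg hs A hA
  -- the largest power that does not vanish
  obtain ⟨k, hk1, hk, hk'⟩ : ∃ k, 1 ≤ k ∧ A ^ k ≠ 0 ∧ A ^ (k + 1) = 0 := by
    classical
    have h1 := Nat.find_spec hnil
    have h2 : ∀ m, m < Nat.find hnil → A ^ m ≠ 0 := fun m hm => Nat.find_min hnil hm
    have h3 : 2 ≤ Nat.find hnil := by
      by_contra hlt
      have : Nat.find hnil = 0 ∨ Nat.find hnil = 1 := by omega
      rcases this with h | h <;> rw [h] at h1
      · apply hA0
        rw [← mul_one A, ← pow_zero A, h1, mul_zero]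
      · exact hA0 (by simpa using h1)
    refine ⟨Nat.find hnil - 1, by omega, h2 _ (by omega), ?_⟩
    rwa [Nat.sub_add_cancel (by omega)]
  have hbig : ∀ r, k < r → A ^ r = 0 := fun r hr => pow_eq_zero_of_le hr hk'
  obtain ⟨w, hw⟩ : ∃ w, A ^ k *ᵥ w ≠ 0 := by
    by_contra! h
    exact hk (Matrix.ext_of_mulVec_single fun i => by rw [h, Matrix.zero_mulVec])
  let y : Fin n → Polynomial ℂ := fun i =>
    ∑ r ∈ Finset.range (k + 1), Polynomial.monomial r ((A ^ r *ᵥ w) i / (r.factorial : ℂ))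
  have hyc : ∀ i r, (y i).coeff r = (A ^ r *ᵥ w) i / (r.factorial : ℂ) := by
    intro i r
    simp only [y, Polynomial.finsetSum_coeff, Polynomial.coeff_monomial, Finset.sum_ite_eq',
      Finset.mem_range]
    split_ifs with h
    · rfl
    · rw [hbig r (by omega)]; simp
  have hyd : ∀ i, (y i).natDegree ≤ k := by
    intro i
    rw [Polynomial.natDegree_le_iff_coeff_eq_zero]
    intro r hr
    rw [hyc, hbig r hr]; simp
  have hyder : ∀ i, Polynomial.derivative (y i) = ∑ j, Polynomial.C (A i j) * y j := by
    intro i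
    ext r
    simp only [Polynomial.coeff_derivative, Polynomial.finsetSum_coeff, Polynomial.coeff_C_mul,
      hyc]
    rw [pow_succ', ← Matrix.mulVec_mulVec, Nat.factorial_succ]
    have h1 : (r.factorial : ℂ) ≠ 0 := by exact_mod_cast r.factorial_ne_zero
    have h2 : (r : ℂ) + 1 ≠ 0 := by exact_mod_cast r.succ_ne_zero
    simp only [← mul_div_assoc, ← Finset.sum_div]
    rw [show ∑ j, A i j * (A ^ r *ᵥ w) j = (A *ᵥ (A ^ r *ᵥ w)) i from rfl]
    push_cast
    field_simp
  have hG : ∀ j, Polynomial.derivative (aeval y (pderiv j g)) =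
      ∑ i, Polynomial.C ((-A) i j) * aeval y (pderiv i g) := by
    intro j
    rw [chain_rule_aux]
    have h1 := congrArg (aeval y) (lin_diff_aux g A hA j)
    simp only [map_sum, map_mul, map_add, aeval_X, map_zero, aeval_C,
      ← Polynomial.C_eq_algebraMap, ← hyder] at h1
    simp only [Matrix.neg_apply, Polynomial.C_neg, neg_mul, Finset.sum_neg_distrib]
    rw [eq_neg_iff_add_eq_zero, ← h1, add_comm]
    congr 1
    exact Finset.sum_congr rfl fun i _ => mul_comm _ _
  have hGr : ∀ r j, Polynomial.derivative^[r] (aeval y (pderiv j g)) =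
      ∑ i, Polynomial.C (((-A) ^ r) i j) * aeval y (pderiv i g) := by
    intro r
    induction r with
    | zero =>
      intro j
      simp [Matrix.one_apply]
    | succ r ih =>
      intro j
      rw [Function.iterate_succ_apply', ih]
      simp only [map_sum, Polynomial.derivative_C_mul, hG, Finset.mul_sum]
      rw [Finset.sum_comm]
      refine Finset.sum_congr rfl fun i _ => ?_
      rw [pow_succ', Matrix.mul_apply, map_sum, Finset.sum_mul]
      refine Finset.sum_congr rfl fun l _ => ?_
      rw [Polynomial.C_mul]; ring
  have hv : (fun i => (y i).coeff k) = 0 := by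
    apply hs
    intro j
    rw [← aeval_top_aux y k (d - 1) hyd _ hg.pderiv]
    have h1 := hGr (k + 1) j
    rw [neg_pow, hk'] at h1
    simp only [mul_zero, Matrix.zero_apply, map_zero, zero_mul, Finset.sum_const_zero] at h1
    have hle : k + 1 ≤ (d - 1) * k := by
      have : 2 * k ≤ (d - 1) * k := Nat.mul_le_mul_right k (by omega)
      omega
    have h2 := congrArg (fun p => Polynomial.coeff p ((d - 1) * k - (k + 1))) h1
    simp only [Polynomial.coeff_iterate_derivative, Polynomial.coeff_zero,
      Nat.sub_add_cancel hle] at h2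
    rcases smul_eq_zero.1 h2 with h | h
    · rw [Nat.descFactorial_eq_zero_iff_lt] at h
      omega
    · exact h
  apply hw
  ext i
  have := congrFun hv i
  simp only [hyc, Pi.zero_apply] at this ⊢
  rcases div_eq_zero_iff.1 this with h | h
  · exact h
  · exact absurd h (by exact_mod_cast k.factorial_ne_zero)

/-- homogeneous part of a power series -/
noncomputable def hpart {n : ℕ} (k : ℕ) (a : MvPowerSeries (Fin n) ℂ) : MvPolynomial (Fin n) ℂ :=
  homogeneousComponent k (MvPowerSeries.truncTotal (k + 1) a)

lemma hpart_hom {n : ℕ} (k : ℕ) (a : MvPowerSeries (Fin n) ℂ) : (hpart k a).IsHomogeneous k :=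
  homogeneousComponent_isHomogeneous _ _

lemma coeff_hpart {n : ℕ} (k : ℕ) (a : MvPowerSeries (Fin n) ℂ) (m : Fin n →₀ ℕ) :
    coeff m (hpart k a) = if m.degree = k then MvPowerSeries.coeff m a else 0 := by
  rw [hpart, coeff_homogeneousComponent]
  split_ifs with h
  · rw [MvPowerSeries.coeff_truncTotal]; omega
  · rfl

lemma hpart_mul {n : ℕ} (k e : ℕ) (a : MvPowerSeries (Fin n) ℂ) (p : MvPolynomial (Fin n) ℂ)
    (hp : p.IsHomogeneous e) : hpart (k + e) (a * (p : MvPowerSeries (Fin n) ℂ)) = hpart k a * p := by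
  ext m
  rw [coeff_hpart]
  split_ifs with h
  · rw [MvPowerSeries.coeff_mul, MvPolynomial.coeff_mul]
    refine Finset.sum_congr rfl fun x hx => ?_
    rw [MvPolynomial.coeff_coe]
    by_cases h0 : coeff x.2 p = 0
    · simp [h0]
    · have h2 : x.2.degree = e := by
        by_contra hne
        exact h0 (hp.coeff_eq_zero hne)
      have h1 : x.1.degree + x.2.degree = k + e := by
        rw [← map_add, Finset.HasAntidiagonal.mem_antidiagonal.1 hx, h]
      rw [coeff_hpart, if_pos (by omega)]
  · exact (((hpart_hom k a).mul hp).coeff_eq_zero h).symm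

lemma hpart_mul_lt {n : ℕ} (k e : ℕ) (hk : k < e) (a : MvPowerSeries (Fin n) ℂ)
    (p : MvPolynomial (Fin n) ℂ)
    (hp : p.IsHomogeneous e) : hpart k (a * (p : MvPowerSeries (Fin n) ℂ)) = 0 := by
  ext m
  rw [coeff_hpart]
  split_ifs with h
  · rw [MvPowerSeries.coeff_mul, MvPolynomial.coeff_zero]
    refine Finset.sum_eq_zero fun x hx => ?_
    rw [MvPolynomial.coeff_coe, hp.coeff_eq_zero, mul_zero]
    have h1 : x.1.degree + x.2.degree = k := by
      rw [← map_add, Finset.HasAntidiagonal.mem_antidiagonal.1 hx, h]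
    omega
  · simp

lemma hpart_coe {n : ℕ} (k e : ℕ) (p : MvPolynomial (Fin n) ℂ)
    (hp : p.IsHomogeneous e) : hpart k (p : MvPowerSeries (Fin n) ℂ) = if k = e then p else 0 := by
  ext m
  rw [coeff_hpart, MvPolynomial.coeff_coe]
  split_ifs with h h' h'
  · rfl
  · rw [hp.coeff_eq_zero (by omega)]; simp
  · rw [hp.coeff_eq_zero (by omega)]
  · simp

lemma hpart_add {n : ℕ} (k : ℕ) (a b : MvPowerSeries (Fin n) ℂ) :
    hpart k (a + b) = hpart k a + hpart k b := by simp [hpart]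

lemma hpart_sum {n : ℕ} (k : ℕ) (a : Fin n → MvPowerSeries (Fin n) ℂ) :
    hpart k (∑ i, a i) = ∑ i, hpart k (a i) := by simp [hpart]

lemma hom_one_eq {n : ℕ} (p : MvPolynomial (Fin n) ℂ) (hp : p.IsHomogeneous 1) :
    p = ∑ j, C (coeff (Finsupp.single j 1) p) * X j := by
  have h := hp.sum_X_mul_pderiv
  rw [one_smul] at h
  rw [← h]
  refine Finset.sum_congr rfl fun j _ => ?_
  have h0 : (pderiv j p).IsHomogeneous 0 := hp.pderiv
  rw [mul_comm]
  congr 1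
  rw [h]
  have h1 := (totalDegree_eq_zero_iff_eq_C).1 (Nat.le_zero.1 h0.totalDegree_le)
  rw [h1]
  congr 1
  rw [coeff_pderiv]
  simp

theorem stmt_0 (n : ℕ) (hn : 1 ≤ n) (d : ℕ) (hd : 3 ≤ d)
    (g h : MvPolynomial (Fin n) ℂ)
    (hg : g.IsHomogeneous d)
    (hgsing : ∀ a : Fin n → ℂ, (∀ i : Fin n, eval a (pderiv i g) = 0) → a = 0)
    (hh : h.IsHomogeneous (d + 1))
    (hhJ : h ∉ Ideal.span (Set.range fun i : Fin n => pderiv i g)) :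
    MvPolynomial.coeToMvPowerSeries.ringHom (g + h) ∉
      Ideal.span (Set.range fun i : Fin n =>
        MvPolynomial.coeToMvPowerSeries.ringHom (pderiv i (g + h))) := by
  intro hmem
  rw [Ideal.mem_span_range_iff_exists_fun] at hmem
  obtain ⟨a, ha⟩ := hmem
  simp only [map_add, MvPolynomial.coeToMvPowerSeries.ringHom_apply, mul_add,
    Finset.sum_add_distrib] at ha
  have hpg : ∀ i, (pderiv i g).IsHomogeneous (d - 1) := fun i => hg.pderiv
  have hph : ∀ i, (pderiv i h).IsHomogeneous d := fun i => hh.pderiv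
  obtain ⟨e, rfl⟩ : ∃ e, d = e + 1 := ⟨d - 1, by omega⟩
  simp only [Nat.add_sub_cancel] at hpg
  have key : ∀ k, hpart k (∑ i, a i * (pderiv i g : MvPowerSeries (Fin n) ℂ)) +
      hpart k (∑ i, a i * (pderiv i h : MvPowerSeries (Fin n) ℂ)) =
      (if k = e + 1 then g else 0) + (if k = e + 1 + 1 then h else 0) := by
    intro k
    rw [← hpart_add, ha, hpart_add, hpart_coe _ _ _ hg, hpart_coe _ _ _ hh]
  simp only [hpart_sum] at key
  have k0 := key (0 + e)
  have k1 := key (1 + e)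
  have k2 := key (2 + e)
  simp only [fun k i => hpart_mul k e (a i) _ (hpg i)] at k0 k1 k2
  simp only [fun i => hpart_mul_lt (0 + e) (e + 1) (by omega) (a i) _ (hph i)] at k0
  rw [show 1 + e = 0 + (e + 1) by omega] at k1
  rw [show 2 + e = 1 + (e + 1) by omega] at k2
  simp only [fun k i => hpart_mul k (e + 1) (a i) _ (hph i)] at k1 k2
  rw [if_neg (by omega), if_neg (by omega)] at k0
  rw [if_pos (by omega), if_neg (by omega)] at k1
  rw [if_neg (by omega), if_pos (by omega)] at k2
  simp only [Finset.sum_const_zero, add_zero, zero_add] at k0 k1 k2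
  have c0 : ∀ i, hpart 0 (a i) = C (coeff 0 (hpart 0 (a i))) := fun i =>
    (totalDegree_eq_zero_iff_eq_C).1 (Nat.le_zero.1 (hpart_hom 0 (a i)).totalDegree_le)
  have z0 : ∀ i, hpart 0 (a i) = 0 := by
    intro i
    have := const_syz_aux hd g hg hgsing (fun i => coeff 0 (hpart 0 (a i))) (by
      rw [← k0]; exact Finset.sum_congr rfl fun i _ => by rw [← c0 i])
    rw [c0 i, congrFun this i]; simp
  simp only [z0, zero_mul, Finset.sum_const_zero, add_zero] at k1
  have hD : ((e + 1 : ℕ) : ℂ) ≠ 0 := by exact_mod_cast e.succ_ne_zero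
  set c : ℂ := ((e + 1 : ℕ) : ℂ)⁻¹ with hc
  have hcD : (C c : MvPolynomial (Fin n) ℂ) * ((e + 1 : ℕ) : MvPolynomial (Fin n) ℂ) = 1 := by
    rw [← map_natCast C, ← C_mul, hc, inv_mul_cancel₀ hD, C_1]
  let L : Fin n → MvPolynomial (Fin n) ℂ := fun i => hpart 1 (a i) - C c * X i
  have hL : ∀ i, (L i).IsHomogeneous 1 := fun i =>
    (hpart_hom 1 (a i)).sub (by simpa using (isHomogeneous_C _ c).mul (isHomogeneous_X _ i))
  have hLs : ∑ i, L i * pderiv i g = 0 := by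
    simp only [L, sub_mul, Finset.sum_sub_distrib, k1, mul_assoc, ← Finset.mul_sum,
      hg.sum_X_mul_pderiv, nsmul_eq_mul]
    rw [← mul_assoc, hcD]; ring
  have hA := lin_syz_aux hd g hg hgsing (Matrix.of fun i j => coeff (Finsupp.single j 1) (L i)) (by
    rw [← hLs]
    refine Finset.sum_congr rfl fun i _ => ?_
    simp only [Matrix.of_apply]
    rw [← hom_one_eq _ (hL i)])
  have z1 : ∀ i, hpart 1 (a i) = C c * X i := by
    intro i
    rw [← sub_eq_zero]
    change L i = 0
    rw [hom_one_eq _ (hL i)]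
    refine Finset.sum_eq_zero fun j _ => ?_
    have : coeff (Finsupp.single j 1) (L i) = 0 := congrFun (congrFun hA i) j
    rw [this]; simp
  simp only [z1, mul_assoc, ← Finset.mul_sum, hh.sum_X_mul_pderiv, nsmul_eq_mul] at k2
  apply hhJ
  have hfin : h = ∑ i, (-((e + 1 : ℕ) : MvPolynomial (Fin n) ℂ) * hpart 2 (a i)) * pderiv i g := by
    simp only [mul_assoc, ← Finset.mul_sum]
    push_cast at k2 hcD ⊢
    linear_combination ((e : MvPolynomial (Fin n) ℂ) + 1) * k2 - ((e : MvPolynomial (Fin n) ℂ) + 1 + 1) * h * hcD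
  rw [hfin]
  exact Ideal.sum_mem _ fun i _ => Ideal.mul_mem_left _ _ (Ideal.subset_span ⟨i, rfl⟩)
end

section
/- Let n ≥ 2 and let f = g + h in ℂ[x₁,…,xₙ], where g is homogeneous of degree n+1, the only common zero in ℂⁿ of ∂g/∂x₁, …, ∂g/∂xₙ is the origin, and h lies in the (n+2)-nd power of the ideal (x₁,…,xₙ) (i.e., every monomial appearing in h has total degree at least n+2). Assume that the image of f in ℂ[[x₁,…,xₙ]] does not belong to the ideal of ℂ[[x₁,…,xₙ]] generated by the images of ∂f/∂x₁, …, ∂f/∂xₙ. Then the image of f in ℂ[[x₁,…,xₙ]] does not belong to the ideal J₁(f) of ℂ[[x₁,…,xₙ]] generated by the elements xᵢ·f for 1 ≤ i ≤ n together with the elements δ_{ij}·f − xᵢ·(∂f/∂xⱼ) for 1 ≤ i, j ≤ n, where δ_{ij} is the Kronecker delta. -/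
open MvPolynomial

lemma aux_low {n k : ℕ} (p : MvPolynomial (Fin n) ℂ)
    (hp : ∀ d : Fin n →₀ ℕ, d.degree < k → coeff d p = 0) (i j : Fin n)
    (d : Fin n →₀ ℕ) (hd : d.degree < k) : coeff d (X i * pderiv j p) = 0 := by
  classical
  rw [coeff_X_mul']
  split_ifs with hi
  · rw [coeff_pderiv, hp, zero_mul]
    have h1 : d - Finsupp.single i 1 + Finsupp.single i 1 = d := by
      apply tsub_add_cancel_of_le
      rw [Finsupp.single_le_iff]
      exact Nat.one_le_iff_ne_zero.mpr (Finsupp.mem_support_iff.mp hi)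
    have h2 := congrArg Finsupp.degree h1
    rw [map_add, Finsupp.degree_single] at h2
    rw [map_add, Finsupp.degree_single]
    omega
  · rfl

lemma aux_coeff {n k : ℕ} (u : MvPowerSeries (Fin n) ℂ) (p : MvPolynomial (Fin n) ℂ)
    (hp : ∀ d : Fin n →₀ ℕ, d.degree < k → coeff d p = 0)
    (m : Fin n →₀ ℕ) (hm : m.degree = k) :
    MvPowerSeries.coeff m (u * coeToMvPowerSeries.ringHom p) =
      MvPowerSeries.constantCoeff u * coeff m p := by
  classical
  rw [MvPowerSeries.coeff_mul, Finset.sum_eq_single (0, m)]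
  · simp
  · rintro ⟨a, b⟩ hab hne
    rw [Finset.HasAntidiagonal.mem_antidiagonal] at hab
    simp only at hab ⊢
    have h1 : a ≠ 0 := by
      rintro rfl
      apply hne
      simpa using hab
    have h2 : a.degree ≠ 0 := by
      rwa [Ne, Finsupp.degree_eq_zero_iff]
    have h3 := congrArg Finsupp.degree hab
    rw [map_add] at h3
    have : coeff b p = 0 := hp b (by omega)
    simp [this]
  · intro hx
    exact absurd (Finset.HasAntidiagonal.mem_antidiagonal.mpr (by simp)) hx

lemma aux_comm {n : ℕ} (g : MvPolynomial (Fin n) ℂ) (i j : Fin n) :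
    pderiv i (pderiv j g) = pderiv j (pderiv i g) := by
  classical
  ext m
  rw [coeff_pderiv, coeff_pderiv, coeff_pderiv, coeff_pderiv]
  by_cases hij : i = j
  · subst hij; rfl
  · have h1 : (m + Finsupp.single i 1 + Finsupp.single j 1) =
      (m + Finsupp.single j 1 + Finsupp.single i 1) := by abel
    have hji : j ≠ i := fun h => hij h.symm
    rw [h1]
    simp [Finsupp.single_apply, hij, hji]
    ring

lemma aux_trace {n : ℕ} (hn : 2 ≤ n) (g : MvPolynomial (Fin n) ℂ)
    (hg : g.IsHomogeneous (n + 1))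
    (hgsing : ∀ a : Fin n → ℂ, (∀ i : Fin n, eval a (pderiv i g) = 0) → a = 0)
    (M : Matrix (Fin n) (Fin n) ℂ)
    (hM : ∑ i, ∑ j, C (M i j) * (X i * pderiv j g) = 0) : M.trace = 0 := by
  classical
  have hstep : ∀ t ∈ M.charpoly.roots, -(n : ℂ) * t ∈ M.charpoly.roots := by
    intro t ht
    rw [Polynomial.mem_roots (Matrix.charpoly_monic M).ne_zero, Polynomial.IsRoot.def] at ht ⊢
    rw [← Matrix.charpoly_transpose, Matrix.eval_charpoly,
      ← Matrix.exists_mulVec_eq_zero_iff] at ht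
    rw [Matrix.eval_charpoly, ← Matrix.exists_mulVec_eq_zero_iff]
    obtain ⟨v, hv0, hv⟩ := ht
    refine ⟨fun j => eval v (pderiv j g), ?_, ?_⟩
    · intro h0
      exact hv0 (hgsing v fun i => congrFun h0 i)
    · have hv' : ∀ j, ∑ i, M i j * v i = t * v j := by
        intro j
        have := congrFun hv j
        simp [Matrix.sub_mulVec, sub_eq_zero] at this
        rw [this]
        simp [Matrix.mulVec, dotProduct, Matrix.transpose_apply]
      ext k
      have hE : ∑ j, v j * eval v (pderiv j (pderiv k g)) = n * eval v (pderiv k g) := by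
        have h1 := (hg.pderiv (i := k)).sum_X_mul_pderiv
        have := congrArg (eval v) h1
        simpa using this
      have hD := congrArg (fun q => eval v (pderiv k q)) hM
      simp only [map_sum, pderiv_C, zero_mul, Finset.sum_const_zero, zero_add, pderiv_mul, map_zero, map_mul, map_add, eval_C,
        eval_X, mul_add, Finset.sum_add_distrib] at hD
      have hA : ∑ i, ∑ j, M i j * (eval v (pderiv k (X i)) * eval v (pderiv j g))
          = ∑ j, M k j * eval v (pderiv j g) := by
        rw [Finset.sum_eq_single k]
        · simp
        · intro i _ hi
          simp [pderiv_X_of_ne hi]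
        · simp
      have hB : ∑ i, ∑ j, M i j * (v i * eval v (pderiv k (pderiv j g)))
          = t * (n * eval v (pderiv k g)) := by
        rw [Finset.sum_comm, ← hE, Finset.mul_sum]
        refine Finset.sum_congr rfl fun j _ => ?_
        rw [← mul_assoc, ← hv' j, Finset.sum_mul, aux_comm g k j]
        refine Finset.sum_congr rfl fun i _ => ?_
        ring
      rw [hA, hB] at hD
      simp only [Matrix.sub_mulVec, Pi.sub_apply, Pi.zero_apply, Matrix.scalar_apply,
        Matrix.mulVec_diagonal]
      simp only [Matrix.mulVec, dotProduct]
      linear_combination -hD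
  have hzero : ∀ t ∈ M.charpoly.roots, t = 0 := by
    intro t ht
    obtain ⟨s, hs, hmax⟩ := Finset.exists_max_image M.charpoly.roots.toFinset (fun z => ‖z‖)
      ⟨t, Multiset.mem_toFinset.mpr ht⟩
    have h1 := hmax _ (Multiset.mem_toFinset.mpr (hstep s (Multiset.mem_toFinset.mp hs)))
    have h2 := hmax t (Multiset.mem_toFinset.mpr ht)
    simp only [norm_mul, norm_neg, Complex.norm_natCast] at h1
    have h3 : (2 : ℝ) ≤ n := by exact_mod_cast hn
    have h4 : ‖t‖ ≤ 0 := by nlinarith [norm_nonneg s]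
    exact norm_le_zero_iff.mp h4
  rw [Matrix.trace_eq_sum_roots_charpoly]
  exact Multiset.sum_eq_zero hzero



theorem stmt_1 (n : ℕ) (hn : 2 ≤ n)
    (g h : MvPolynomial (Fin n) ℂ)
    (hg : g.IsHomogeneous (n + 1))
    (hgsing : ∀ a : Fin n → ℂ, (∀ i : Fin n, eval a (pderiv i g) = 0) → a = 0)
    (hh : h ∈ (Ideal.span (Set.range (X : Fin n → MvPolynomial (Fin n) ℂ))) ^ (n + 2))
    (hfJac : MvPolynomial.coeToMvPowerSeries.ringHom (g + h) ∉
      Ideal.span (Set.range fun i : Fin n =>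
        MvPolynomial.coeToMvPowerSeries.ringHom (pderiv i (g + h)))) :
    MvPolynomial.coeToMvPowerSeries.ringHom (g + h) ∉
      Ideal.span
        ((Set.range fun i : Fin n =>
            MvPolynomial.coeToMvPowerSeries.ringHom (X i * (g + h))) ∪
         (Set.range fun p : Fin n × Fin n =>
            MvPolynomial.coeToMvPowerSeries.ringHom
              ((if p.1 = p.2 then g + h else 0) - X p.1 * pderiv p.2 (g + h)))) := by
  classical
  intro hmem
  rw [Ideal.span_union, Submodule.mem_sup] at hmem
  obtain ⟨y, hy, z, hz, hyz⟩ := hmem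
  obtain ⟨a, ha⟩ := Ideal.mem_span_range_iff_exists_fun.mp hy
  obtain ⟨c, hc⟩ := Ideal.mem_span_range_iff_exists_fun.mp hz
  have hlowh : ∀ d : Fin n →₀ ℕ, d.degree < n + 2 → coeff d h = 0 :=
    (MvPolynomial.mem_pow_idealOfVars_iff' (n + 2) h).mp hh
  have hlowg : ∀ d : Fin n →₀ ℕ, d.degree < n + 1 → coeff d g = 0 := by
    intro d hd
    exact hg.coeff_eq_zero (by omega)
  have hlowf : ∀ d : Fin n →₀ ℕ, d.degree < n + 1 → coeff d (g + h) = 0 := by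
    intro d hd
    rw [coeff_add, hlowg d hd, hlowh d (by omega), add_zero]
  set φ : MvPolynomial (Fin n) ℂ →+* MvPowerSeries (Fin n) ℂ :=
    MvPolynomial.coeToMvPowerSeries.ringHom with hφ
  have hX : ∀ i : Fin n, MvPowerSeries.constantCoeff (φ (X i)) = 0 := by
    intro i
    simp [hφ]
  -- the basic relation
  have hrel : (1 - ∑ i, a i * φ (X i) - ∑ i, c (i, i)) * φ (g + h) =
      - ∑ i, ∑ j, c (i, j) * φ (X i * pderiv j (g + h)) := by
    have h1 : z = (∑ i, c (i, i)) * φ (g + h)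
        - ∑ i, ∑ j, c (i, j) * φ (X i * pderiv j (g + h)) := by
      rw [← hc, Fintype.sum_prod_type]
      simp only [map_sub, mul_sub, Finset.sum_sub_distrib]
      congr 1
      rw [Finset.sum_mul]
      refine Finset.sum_congr rfl fun i _ => ?_
      rw [Finset.sum_eq_single i]
      · simp
      · intro j _ hj
        simp [hj.symm]
      · simp
    have h2 : y = (∑ i, a i * φ (X i)) * φ (g + h) := by
      rw [← ha, Finset.sum_mul]
      refine Finset.sum_congr rfl fun i _ => ?_
      rw [map_mul]; ring
    linear_combination h1 + h2 - hyz
  set u := (1 - ∑ i, a i * φ (X i) - ∑ i, c (i, i)) with hu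
  have hu0 : MvPowerSeries.constantCoeff u = 0 := by
    by_contra hne
    have hunit : IsUnit u := MvPowerSeries.isUnit_iff_constantCoeff.mpr (isUnit_iff_ne_zero.mpr hne)
    apply hfJac
    rw [← Ideal.unit_mul_mem_iff_mem _ hunit, hrel]
    refine neg_mem (Ideal.sum_mem _ fun i _ => Ideal.sum_mem _ fun j _ => ?_)
    rw [map_mul, ← mul_assoc]
    exact Ideal.mul_mem_left _ _ (Ideal.subset_span ⟨j, rfl⟩)
  let M : Matrix (Fin n) (Fin n) ℂ :=
    Matrix.of fun i j => MvPowerSeries.constantCoeff (c (i, j))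
  have htr : M.trace = 1 := by
    have h1 : MvPowerSeries.constantCoeff u = 1 - M.trace := by
      simp only [hu, map_sub, map_one, map_sum, map_mul, hX, mul_zero, Finset.sum_const_zero,
        sub_zero]
      rfl
    rw [hu0] at h1
    linear_combination h1
  have hM : ∑ i, ∑ j, C (M i j) * (X i * pderiv j g) = 0 := by
    ext m
    rw [coeff_zero]
    by_cases hm : m.degree = n + 1
    · have h1 := congrArg (MvPowerSeries.coeff m) hrel
      rw [aux_coeff u _ hlowf m hm, hu0, zero_mul, map_neg, eq_comm, neg_eq_zero] at h1
      rw [← h1]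
      simp only [coeff_sum, map_sum, coeff_C_mul]
      refine Finset.sum_congr rfl fun i _ => Finset.sum_congr rfl fun j _ => ?_
      rw [aux_coeff _ _ (fun d hd => aux_low _ hlowf i j d hd) m hm, map_add, mul_add, coeff_add,
        aux_low h hlowh i j m (by omega), add_zero]
      rfl
    · simp only [coeff_sum, coeff_C_mul]
      refine Finset.sum_eq_zero fun i _ => Finset.sum_eq_zero fun j _ => ?_
      have h1 : (X i * pderiv j g).IsHomogeneous (1 + n) := by
        exact (isHomogeneous_X ℂ i).mul (hg.pderiv (i := j))
      rw [h1.coeff_eq_zero (by omega), mul_zero]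
  have := aux_trace hn g hg hgsing M hM
  rw [htr] at this
  exact one_ne_zero this
end

section
/- Let f = x⁴ + y⁴ + z⁴ + x·y²·z² in ℂ[x,y,z], and let J₁ be the ideal of ℂ[[x,y,z]] generated by the images of the twelve polynomials x·f, y·f, z·f, f − x·∂f/∂x, x·∂f/∂y, x·∂f/∂z, y·∂f/∂x, f − y·∂f/∂y, y·∂f/∂z, z·∂f/∂x, z·∂f/∂y, f − z·∂f/∂z. Then the image of x·y²·z² in ℂ[[x,y,z]] does not belong to the ideal J₁ + (x,y,z)⁶, where (x,y,z)⁶ denotes the sixth power of the ideal of ℂ[[x,y,z]] generated by x, y, z. -/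
open MvPolynomial

/-- The canonical ring homomorphism `ℂ[x,y,z] → ℂ[[x,y,z]]`. -/
noncomputable def ι : MvPolynomial (Fin 3) ℂ →+* MvPowerSeries (Fin 3) ℂ :=
  MvPolynomial.coeToMvPowerSeries.ringHom

/-- The polynomial `f = x⁴ + y⁴ + z⁴ + x·y²·z²` in `ℂ[x,y,z]`. -/
noncomputable def f : MvPolynomial (Fin 3) ℂ :=
  X 0 ^ 4 + X 1 ^ 4 + X 2 ^ 4 + X 0 * X 1 ^ 2 * X 2 ^ 2

/-- The ideal `J₁` of `ℂ[[x,y,z]]` generated by the images of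
`x·f, y·f, z·f` and `δ_{ij}·f − xᵢ·(∂f/∂xⱼ)` for `i, j = 1, 2, 3`. -/
noncomputable def J₁ : Ideal (MvPowerSeries (Fin 3) ℂ) :=
  Ideal.span
    { ι (X 0 * f), ι (X 1 * f), ι (X 2 * f),
      ι (f - X 0 * pderiv 0 f), ι (X 0 * pderiv 1 f), ι (X 0 * pderiv 2 f),
      ι (X 1 * pderiv 0 f), ι (f - X 1 * pderiv 1 f), ι (X 1 * pderiv 2 f),
      ι (X 2 * pderiv 0 f), ι (X 2 * pderiv 1 f), ι (f - X 2 * pderiv 2 f) }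


namespace Aux

/-- Exponent vector `(a, b, c)`. -/
noncomputable def E (a b c : ℕ) : Fin 3 →₀ ℕ :=
  Finsupp.single 0 a + Finsupp.single 1 b + Finsupp.single 2 c

/-- The monomial with exponent `(a, b, c)`. -/
noncomputable def M (a b c : ℕ) : MvPowerSeries (Fin 3) ℂ :=
  MvPowerSeries.X 0 ^ a * MvPowerSeries.X 1 ^ b * MvPowerSeries.X 2 ^ c

lemma M_eq (a b c : ℕ) : M a b c = MvPowerSeries.monomial (E a b c) 1 := by
  simp [M, E, MvPowerSeries.X_pow_eq, MvPowerSeries.monomial_mul_monomial]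

lemma E_le (i j k a b c : ℕ) : E i j k ≤ E a b c ↔ i ≤ a ∧ j ≤ b ∧ k ≤ c := by
  simp [E, Finsupp.le_def, Fin.forall_fin_succ]

lemma E_sub (i j k a b c : ℕ) : E a b c - E i j k = E (a - i) (b - j) (c - k) := by
  ext t
  fin_cases t <;> simp [E]

lemma coeff_mul_M (q : MvPowerSeries (Fin 3) ℂ) (i j k a b c : ℕ) :
    MvPowerSeries.coeff (E a b c) (q * M i j k) =
      if i ≤ a ∧ j ≤ b ∧ k ≤ c then MvPowerSeries.coeff (E (a - i) (b - j) (c - k)) q else 0 := by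
  classical
  rw [M_eq, MvPowerSeries.coeff_mul_monomial]
  simp [E_le, E_sub]

/-- The linear functional separating `x y² z²` from the ideal. -/
noncomputable def φ : MvPowerSeries (Fin 3) ℂ →ₗ[ℂ] ℂ :=
  (4 : ℂ) • MvPowerSeries.coeff (E 1 2 2) - (2 : ℂ) • MvPowerSeries.coeff (E 4 0 0)
    - (3 : ℂ) • MvPowerSeries.coeff (E 0 4 0) - (3 : ℂ) • MvPowerSeries.coeff (E 0 0 4)

lemma φ_M (q : MvPowerSeries (Fin 3) ℂ) (i j k : ℕ) : φ (q * M i j k) =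
    4 * MvPowerSeries.coeff (E 1 2 2) (q * M i j k) -
    2 * MvPowerSeries.coeff (E 4 0 0) (q * M i j k) -
    3 * MvPowerSeries.coeff (E 0 4 0) (q * M i j k) -
    3 * MvPowerSeries.coeff (E 0 0 4) (q * M i j k) := by
  simp [φ]

/-- The largest ideal inside the kernel of `φ`. -/
noncomputable def K : Ideal (MvPowerSeries (Fin 3) ℂ) where
  carrier := {p | ∀ q, φ (q * p) = 0}
  zero_mem' := by simp
  add_mem' := by
    intro a b ha hb q
    rw [mul_add, map_add, ha q, hb q, add_zero]
  smul_mem' := by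
    intro c x hx q
    rw [smul_eq_mul, ← mul_assoc]
    exact hx _

lemma mem_K {p : MvPowerSeries (Fin 3) ℂ} : p ∈ K ↔ ∀ q, φ (q * p) = 0 := Iff.rfl

lemma ι_X (i : Fin 3) : ι (X i) = MvPowerSeries.X i := by
  simp [ι]

lemma ι_two : ι 2 = 2 := map_ofNat ι 2

lemma ι_four : ι 4 = 4 := map_ofNat ι 4

lemma ι_f : ι f = M 4 0 0 + M 0 4 0 + M 0 0 4 + M 1 2 2 := by
  simp [f, M, ι_X]

lemma ι_f0 : ι (pderiv 0 f) = 4 • M 3 0 0 + M 0 2 2 := by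
  simp [f, M, ι_X, pderiv_X, ι_two, ι_four]
  ring

lemma ι_f1 : ι (pderiv 1 f) = 4 • M 0 3 0 + 2 • M 1 1 2 := by
  simp [f, M, ι_X, pderiv_X, ι_two, ι_four]
  ring

lemma ι_f2 : ι (pderiv 2 f) = 4 • M 0 0 3 + 2 • M 1 2 1 := by
  simp [f, M, ι_X, pderiv_X, ι_two, ι_four]
  ring

lemma X0_M (a b c : ℕ) : MvPowerSeries.X 0 * M a b c = M (a + 1) b c := by
  simp only [M]; ring

lemma X1_M (a b c : ℕ) : MvPowerSeries.X 1 * M a b c = M a (b + 1) c := by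
  simp only [M]; ring

lemma X2_M (a b c : ℕ) : MvPowerSeries.X 2 * M a b c = M a b (c + 1) := by
  simp only [M]; ring

lemma J₁_le : J₁ ≤ K := by
  unfold J₁
  rw [Ideal.span_le]
  intro p hp
  simp only [Set.mem_insert_iff, Set.mem_singleton_iff] at hp
  rw [SetLike.mem_coe, mem_K]
  intro q
  rcases hp with h | h | h | h | h | h | h | h | h | h | h | h <;> subst h <;>
    simp only [map_mul, map_sub, ι_X, ι_f, ι_f0, ι_f1, ι_f2, mul_add, mul_sub, mul_smul_comm,
      X0_M, X1_M, X2_M, map_add, map_nsmul, φ_M, coeff_mul_M] <;> norm_num <;> ring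

lemma le_order_of_mem (n : ℕ) : ∀ p ∈ (Ideal.span {(MvPowerSeries.X 0 : MvPowerSeries (Fin 3) ℂ),
        MvPowerSeries.X 1, MvPowerSeries.X 2}) ^ n, (n : ℕ∞) ≤ p.order := by
  have h1 : ∀ p ∈ Ideal.span {(MvPowerSeries.X 0 : MvPowerSeries (Fin 3) ℂ),
        MvPowerSeries.X 1, MvPowerSeries.X 2}, (1 : ℕ∞) ≤ p.order := by
    intro p hp
    rw [MvPowerSeries.one_le_order_iff_constCoeff_eq_zero]
    have : Ideal.span {(MvPowerSeries.X 0 : MvPowerSeries (Fin 3) ℂ),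
        MvPowerSeries.X 1, MvPowerSeries.X 2} ≤
        RingHom.ker (MvPowerSeries.constantCoeff (σ := Fin 3) (R := ℂ)) := by
      rw [Ideal.span_le]
      rintro x (rfl | rfl | rfl) <;> simp
    exact this hp
  induction n with
  | zero => simp
  | succ n ih =>
    intro p hp
    rw [pow_succ] at hp
    induction hp using Submodule.mul_induction_on' with
    | mem_mul_mem a ha b hb =>
      refine le_trans ?_ MvPowerSeries.le_order_mul
      push_cast
      exact add_le_add (ih a ha) (h1 b hb)
    | add a _ b _ ha hb => exact le_trans (le_min ha hb) MvPowerSeries.min_order_le_add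

lemma pow_le : (Ideal.span {(MvPowerSeries.X 0 : MvPowerSeries (Fin 3) ℂ),
        MvPowerSeries.X 1, MvPowerSeries.X 2}) ^ 6 ≤ K := by
  intro p hp
  rw [mem_K]
  intro q
  have h := le_order_of_mem 6 _ (Ideal.mul_mem_left _ q hp)
  have hc : ∀ a b c : ℕ, a + b + c < 6 → MvPowerSeries.coeff (E a b c) (q * p) = 0 := by
    intro a b c habc
    apply MvPowerSeries.coeff_of_lt_order
    refine lt_of_lt_of_le ?_ h
    have : (E a b c).degree = a + b + c := by simp [E]
    rw [this]
    exact_mod_cast habc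
  simp [φ, hc]

end Aux

theorem stmt_2 :
    ι (X 0 * X 1 ^ 2 * X 2 ^ 2) ∉
      J₁ + (Ideal.span {(MvPowerSeries.X 0 : MvPowerSeries (Fin 3) ℂ),
        MvPowerSeries.X 1, MvPowerSeries.X 2}) ^ 6 := by
  intro h
  have h2 := (sup_le Aux.J₁_le Aux.pow_le) h
  have h3 := Aux.mem_K.1 h2 1
  have h4 : ι (X 0 * X 1 ^ 2 * X 2 ^ 2) = Aux.M 1 2 2 := by
    simp [Aux.M, Aux.ι_X]
  rw [h4, Aux.φ_M] at h3
  simp only [Aux.coeff_mul_M] at h3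
  simp [Aux.E] at h3
end

section
/- Let f = x⁴ + y⁴ + z⁴ + x·y²·z² in ℂ[x,y,z]. Then the image of f in the formal power series ring ℂ[[x,y,z]] does not belong to the ideal of ℂ[[x,y,z]] generated by the images of the partial derivatives ∂f/∂x, ∂f/∂y, ∂f/∂z. -/
open MvPolynomial

/-- exponent vector -/
noncomputable def ex (a b c : ℕ) : Fin 3 →₀ ℕ := Finsupp.equivFunOnFinite.symm ![a, b, c]

theorem ex_le (a b c a' b' c' : ℕ) : ex a b c ≤ ex a' b' c' ↔ a ≤ a' ∧ b ≤ b' ∧ c ≤ c' := by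
  rw [Finsupp.le_def]
  simp [ex, Fin.forall_fin_succ]

theorem ex_sub (a b c a' b' c' : ℕ) :
    ex a b c - ex a' b' c' = ex (a - a') (b - b') (c - c') := by
  ext i
  fin_cases i <;> simp [ex]

theorem mon_eq (r : ℂ) (a b c : ℕ) :
    ι (C r * X 0 ^ a * X 1 ^ b * X 2 ^ c) = MvPowerSeries.monomial (ex a b c) r := by
  have : (C r * X 0 ^ a * X 1 ^ b * X 2 ^ c : MvPolynomial (Fin 3) ℂ)
      = MvPolynomial.monomial (ex a b c) r := by
    rw [MvPolynomial.monomial_eq, Finsupp.prod_fintype _ _ (by simp)]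
    simp [Fin.prod_univ_succ, ex, mul_assoc]
  rw [this]
  exact MvPolynomial.coe_monomial _ _

theorem coeff_mon (p : MvPowerSeries (Fin 3) ℂ) (r : ℂ) (a b c a' b' c' : ℕ) :
    MvPowerSeries.coeff (ex a b c) (p * MvPowerSeries.monomial (ex a' b' c') r) =
      if a' ≤ a ∧ b' ≤ b ∧ c' ≤ c then
        MvPowerSeries.coeff (ex (a - a') (b - b') (c - c')) p * r else 0 := by
  classical
  rw [MvPowerSeries.coeff_mul_monomial]
  simp only [ex_le, ex_sub]

theorem f_eq : ι f = 1 * MvPowerSeries.monomial (ex 4 0 0) 1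
    + 1 * MvPowerSeries.monomial (ex 0 4 0) 1
    + 1 * MvPowerSeries.monomial (ex 0 0 4) 1 + 1 * MvPowerSeries.monomial (ex 1 2 2) 1 := by
  simp only [← mon_eq, ← map_add, one_mul]
  refine congrArg ι ?_
  simp [f]

theorem fx_eq : ι (pderiv 0 f) = MvPowerSeries.monomial (ex 3 0 0) 4
    + MvPowerSeries.monomial (ex 0 2 2) 1 := by
  simp only [← mon_eq, ← map_add]
  congr 1
  simp [f, pderiv_X, Pi.single_apply, map_ofNat]
  ring

theorem fy_eq : ι (pderiv 1 f) = MvPowerSeries.monomial (ex 0 3 0) 4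
    + MvPowerSeries.monomial (ex 1 1 2) 2 := by
  simp only [← mon_eq, ← map_add]
  congr 1
  simp [f, pderiv_X, Pi.single_apply, map_ofNat]
  ring

theorem fz_eq : ι (pderiv 2 f) = MvPowerSeries.monomial (ex 0 0 3) 4
    + MvPowerSeries.monomial (ex 1 2 1) 2 := by
  simp only [← mon_eq, ← map_add]
  congr 1
  simp [f, pderiv_X, Pi.single_apply, map_ofNat]
  ring

/-- A linear functional killing the Jacobian ideal but not `f`. -/
noncomputable def phi (p : MvPowerSeries (Fin 3) ℂ) : ℂ :=
  4 * MvPowerSeries.coeff (ex 1 2 2) p - MvPowerSeries.coeff (ex 4 0 0) p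
    - 2 * MvPowerSeries.coeff (ex 0 4 0) p - 2 * MvPowerSeries.coeff (ex 0 0 4) p

theorem coeff_one_ex : MvPowerSeries.coeff (ex 0 0 0) (1 : MvPowerSeries (Fin 3) ℂ) = 1 := by
  have : ex 0 0 0 = 0 := by ext i; fin_cases i <;> simp [ex]
  simp [this]

theorem stmt_3 :
    ι f ∉ Ideal.span {ι (pderiv 0 f), ι (pderiv 1 f), ι (pderiv 2 f)} := by
  intro h
  rw [Ideal.mem_span_insert] at h
  obtain ⟨a, w, hw, h⟩ := h
  rw [Ideal.mem_span_pair] at hw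
  obtain ⟨b, c, rfl⟩ := hw
  have h2 := congrArg phi h
  rw [f_eq, fx_eq, fy_eq, fz_eq] at h2
  simp only [phi, mul_add, map_add, coeff_mon] at h2
  norm_num [coeff_one_ex] at h2
  ring_nf at h2
  norm_num at h2
end

section
/- Let f = x⁴ + y⁴ + z⁴ + x·y²·z² in ℂ[x,y,z]. If (a,b,c) ∈ ℂ³ satisfies f(a,b,c) = 0, ∂f/∂x(a,b,c) = 0, ∂f/∂y(a,b,c) = 0, and ∂f/∂z(a,b,c) = 0, then (a,b,c) = (0,0,0). In other words, the common zero locus in ℂ³ of f, ∂f/∂x, ∂f/∂y, ∂f/∂z is exactly the origin. -/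
open MvPolynomial

theorem stmt_4 (a b c : ℂ)
    (hf : eval ![a, b, c] f = 0)
    (hx : eval ![a, b, c] (pderiv 0 f) = 0)
    (hy : eval ![a, b, c] (pderiv 1 f) = 0)
    (hz : eval ![a, b, c] (pderiv 2 f) = 0) :
    a = 0 ∧ b = 0 ∧ c = 0 := by
  have h1 : a ^ 4 + b ^ 4 + c ^ 4 + a * b ^ 2 * c ^ 2 = 0 := by
    simpa [f] using hf
  have h2 : 4 * a ^ 3 + b ^ 2 * c ^ 2 = 0 := by
    simp [f, pderiv_X, Pi.single_apply] at hx
    linear_combination hx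
  have h3 : b * (2 * (2 * b ^ 2 + a * c ^ 2)) = 0 := by
    simp [f, pderiv_X, Pi.single_apply] at hy
    linear_combination hy
  have h4 : c * (2 * (2 * c ^ 2 + a * b ^ 2)) = 0 := by
    simp [f, pderiv_X, Pi.single_apply] at hz
    linear_combination hz
  -- the fourth power of `a` vanishes
  have ha : a = 0 := by
    have h5 : a ^ 4 = 0 := by
      linear_combination h1 - b / 4 * h3 - c / 4 * h4
    exact pow_eq_zero_iff (by norm_num) |>.mp h5
  subst ha
  have hb : b = 0 := by
    have : b ^ 3 = 0 := by linear_combination h3 / 4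
    exact pow_eq_zero_iff (by norm_num) |>.mp this
  have hc : c = 0 := by
    have : c ^ 3 = 0 := by linear_combination h4 / 4
    exact pow_eq_zero_iff (by norm_num) |>.mp this
  exact ⟨rfl, hb, hc⟩
end

section
/- Let f = x⁴ + y⁴ + z⁴ + x·y²·z² in ℂ[x,y,z], and let J₁ be the ideal of ℂ[[x,y,z]] generated by the images of the twelve polynomials x·f, y·f, z·f, f − x·∂f/∂x, x·∂f/∂y, x·∂f/∂z, y·∂f/∂x, f − y·∂f/∂y, y·∂f/∂z, z·∂f/∂x, z·∂f/∂y, f − z·∂f/∂z. Then (x,y,z)⁶ ⊆ J₁, i.e., the sixth power of the ideal of ℂ[[x,y,z]] generated by x, y, z is contained in J₁ (equivalently, every monomial of total degree 6 in x, y, z lies in J₁). -/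
open MvPolynomial

/-- The degree six monomials vanish in any ring where the generators vanish. -/
lemma monomials_vanish {R : Type*} [CommRing R] (q x y z F : R) (hq : q * 4 = 1)
    (hF : F = x ^ 4 + y ^ 4 + z ^ 4 + x * y ^ 2 * z ^ 2)
    (hx : x * F = 0) (hy : y * F = 0) (hz : z * F = 0)
    (h00 : F - x * (4 * x ^ 3 + y ^ 2 * z ^ 2) = 0)
    (h01 : x * (4 * y ^ 3 + 2 * x * y * z ^ 2) = 0)
    (h02 : x * (4 * z ^ 3 + 2 * x * y ^ 2 * z) = 0)
    (h10 : y * (4 * x ^ 3 + y ^ 2 * z ^ 2) = 0)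
    (h11 : F - y * (4 * y ^ 3 + 2 * x * y * z ^ 2) = 0)
    (h12 : y * (4 * z ^ 3 + 2 * x * y ^ 2 * z) = 0)
    (h20 : z * (4 * x ^ 3 + y ^ 2 * z ^ 2) = 0)
    (h21 : z * (4 * y ^ 3 + 2 * x * y * z ^ 2) = 0)
    (h22 : F - z * (4 * z ^ 3 + 2 * x * y ^ 2 * z) = 0)
    (a b c : ℕ) (habc : a + b + c = 6) : x ^ a * y ^ b * z ^ c = 0 := by
  have div4 : ∀ t : R, 4 * t = 0 → t = 0 := fun t ht => by
    linear_combination q * ht - t * hq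
  -- the element `w = x y² z²` is killed by the maximal ideal
  have hw : F + (x * y ^ 2 * z ^ 2) = 0 := by
    linear_combination 4 * hF - h00 - h11 - h22
  have key : ∀ t : R, t * F = 0 → t * (x * y ^ 2 * z ^ 2) = 0 ∧ t * x ^ 4 = 0 ∧
      t * y ^ 4 = 0 ∧ t * z ^ 4 = 0 := fun t ht => by
    have w : t * (x * y ^ 2 * z ^ 2) = 0 := by linear_combination t * hw - ht
    refine ⟨w, div4 _ ?_, div4 _ ?_, div4 _ ?_⟩
    · linear_combination ht - t * h00 - w
    · linear_combination ht - t * h11 - 2 * w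
    · linear_combination ht - t * h22 - 2 * w
  obtain ⟨wx, xx, xy, xz⟩ := key x hx
  obtain ⟨wy, yx, yy, yz⟩ := key y hy
  obtain ⟨wz, zx, zy, zz⟩ := key z hz
  have e330 : x ^ 3 * y ^ 3 = 0 := div4 _ (by linear_combination y ^ 2 * h10 - z ^ 2 * yy)
  have e303 : x ^ 3 * z ^ 3 = 0 := div4 _ (by linear_combination z ^ 2 * h20 - y ^ 2 * zz)
  have e033 : y ^ 3 * z ^ 3 = 0 := div4 _ (by linear_combination z ^ 2 * h21 - 2 * x * y * zz)
  have e321 : x ^ 3 * y ^ 2 * z = 0 := div4 _ (by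
    linear_combination y * z * h10 - z ^ 2 * zy)
  have e312 : x ^ 3 * y * z ^ 2 = 0 := div4 _ (by
    linear_combination z ^ 2 * h10 - y ^ 2 * yz)
  have e231 : x ^ 2 * y ^ 3 * z = 0 := div4 _ (by
    linear_combination x * z * h01 - 2 * z * e312)
  have e213 : x ^ 2 * y * z ^ 3 = 0 := div4 _ (by
    linear_combination x * y * h02 - 2 * z * e330)
  have e132 : x * y ^ 3 * z ^ 2 = 0 := by linear_combination wy
  have e123 : x * y ^ 2 * z ^ 3 = 0 := by linear_combination wz
  have e222 : x ^ 2 * y ^ 2 * z ^ 2 = 0 := by linear_combination wx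
  have ha : a ≤ 6 := by omega
  have hb : b ≤ 6 := by omega
  obtain rfl : c = 6 - a - b := by omega
  interval_cases a <;> interval_cases b <;> first
    | omega
    | grind

theorem stmt_5 :
    (Ideal.span {(MvPowerSeries.X 0 : MvPowerSeries (Fin 3) ℂ),
      MvPowerSeries.X 1, MvPowerSeries.X 2}) ^ 6 ≤ J₁ := by
  set x : MvPowerSeries (Fin 3) ℂ := MvPowerSeries.X 0 with hx
  set y : MvPowerSeries (Fin 3) ℂ := MvPowerSeries.X 1 with hy
  set z : MvPowerSeries (Fin 3) ℂ := MvPowerSeries.X 2 with hz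
  have i0 : ι (X 0) = x := MvPolynomial.coe_X 0
  have i1 : ι (X 1) = y := MvPolynomial.coe_X 1
  have i2 : ι (X 2) = z := MvPolynomial.coe_X 2
  have d0 : pderiv 0 f = 4 * X 0 ^ 3 + X 1 ^ 2 * X 2 ^ 2 := by
    simp [f, pderiv_X, Derivation.leibniz_pow]; ring
  have d1 : pderiv 1 f = 4 * X 1 ^ 3 + 2 * X 0 * X 1 * X 2 ^ 2 := by
    simp [f, pderiv_X, Derivation.leibniz_pow]; ring
  have d2 : pderiv 2 f = 4 * X 2 ^ 3 + 2 * X 0 * X 1 ^ 2 * X 2 := by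
    simp [f, pderiv_X, Derivation.leibniz_pow]; ring
  have gen : ∀ p : MvPolynomial (Fin 3) ℂ, ι p ∈ J₁ → Ideal.Quotient.mk J₁ (ι p) = 0 :=
    fun p hp => Ideal.Quotient.eq_zero_iff_mem.mpr hp
  have base : ∀ a b c : ℕ, a + b + c = 6 → x ^ a * y ^ b * z ^ c ∈ J₁ := by
    intro a b c habc
    rw [← Ideal.Quotient.eq_zero_iff_mem]
    simp only [map_mul, map_pow]
    have g1 := gen (X 0 * f) (Ideal.subset_span (by simp))
    have g2 := gen (X 1 * f) (Ideal.subset_span (by simp))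
    have g3 := gen (X 2 * f) (Ideal.subset_span (by simp))
    have g4 := gen (f - X 0 * pderiv 0 f) (Ideal.subset_span (by simp))
    have g5 := gen (X 0 * pderiv 1 f) (Ideal.subset_span (by simp))
    have g6 := gen (X 0 * pderiv 2 f) (Ideal.subset_span (by simp))
    have g7 := gen (X 1 * pderiv 0 f) (Ideal.subset_span (by simp))
    have g8 := gen (f - X 1 * pderiv 1 f) (Ideal.subset_span (by simp))
    have g9 := gen (X 1 * pderiv 2 f) (Ideal.subset_span (by simp))
    have g10 := gen (X 2 * pderiv 0 f) (Ideal.subset_span (by simp))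
    have g11 := gen (X 2 * pderiv 1 f) (Ideal.subset_span (by simp))
    have g12 := gen (f - X 2 * pderiv 2 f) (Ideal.subset_span (by simp))
    simp only [d0, d1, d2, map_mul, map_sub, map_add, map_pow, map_ofNat, i0, i1, i2]
      at g1 g2 g3 g4 g5 g6 g7 g8 g9 g10 g11 g12
    refine monomials_vanish (Ideal.Quotient.mk J₁ (ι (C (1 / 4)))) _ _ _
      (Ideal.Quotient.mk J₁ (ι f)) ?_ ?_ g1 g2 g3 g4 g5 g6 g7 g8 g9 g10 g11 g12 a b c habc
    · have : (C (1 / 4) : MvPolynomial (Fin 3) ℂ) * 4 = 1 := by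
        rw [← map_ofNat C 4, ← C_mul]; norm_num
      have h := congrArg (fun p => Ideal.Quotient.mk J₁ (ι p)) this
      simpa only [map_mul, map_ofNat, map_one] using h
    · simp only [f, map_mul, map_add, map_pow, i0, i1, i2]
  have step : ∀ k a b c : ℕ, a + b + c + k = 6 → ∀ t ∈ (Ideal.span {x, y, z}) ^ k,
      x ^ a * y ^ b * z ^ c * t ∈ J₁ := by
    intro k
    induction k with
    | zero =>
      intro a b c h t _
      exact Ideal.mul_mem_right _ _ (base a b c (by omega))
    | succ k ih =>
      intro a b c h t ht
      rw [pow_succ] at ht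
      refine Submodule.mul_induction_on ht ?_ ?_
      · intro m hm n hn
        obtain ⟨α, β, γ, rfl⟩ := Submodule.mem_span_triple.mp hn
        have e1 := J₁.mul_mem_left α (ih (a + 1) b c (by omega) m hm)
        have e2 := J₁.mul_mem_left β (ih a (b + 1) c (by omega) m hm)
        have e3 := J₁.mul_mem_left γ (ih a b (c + 1) (by omega) m hm)
        convert J₁.add_mem (J₁.add_mem e1 e2) e3 using 1
        simp only [smul_eq_mul]
        ring
      · intro u v hu hv
        rw [mul_add]
        exact J₁.add_mem hu hv
  intro t ht
  simpa using step 6 0 0 0 (by norm_num) t ht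
end

section
/- Let f = x⁴ + y⁴ + z⁴ + x·y²·z² in ℂ[x,y,z], and let J₁ be the ideal of ℂ[[x,y,z]] generated by the images of the twelve polynomials x·f, y·f, z·f, f − x·∂f/∂x, x·∂f/∂y, x·∂f/∂z, y·∂f/∂x, f − y·∂f/∂y, y·∂f/∂z, z·∂f/∂x, z·∂f/∂y, f − z·∂f/∂z. Then the images of the monomials x⁵, y⁵, z⁵, x⁴y, x⁴z, x·y⁴, x·z⁴, y⁴z, y·z⁴ in ℂ[[x,y,z]] all belong to J₁. -/
open MvPolynomial

theorem aux_quot {Q : Type*} [CommRing Q] (x y z : Q)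
    (hu : IsUnit (8 - 2 * x ^ 2)) (h4 : IsUnit (4 : Q)) (h3 : IsUnit (3 : Q))
    (xf : x * (x ^ 4 + y ^ 4 + z ^ 4 + x * y ^ 2 * z ^ 2) = 0)
    (a : -3 * x ^ 4 + y ^ 4 + z ^ 4 = 0)
    (b : x ^ 4 - 3 * y ^ 4 + z ^ 4 - x * y ^ 2 * z ^ 2 = 0)
    (c : x ^ 4 + y ^ 4 - 3 * z ^ 4 - x * y ^ 2 * z ^ 2 = 0)
    (d : x * (4 * y ^ 3 + 2 * x * y * z ^ 2) = 0)
    (e : x * (4 * z ^ 3 + 2 * x * y ^ 2 * z) = 0)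
    (g : y * (4 * x ^ 3 + y ^ 2 * z ^ 2) = 0)
    (h : y * (4 * z ^ 3 + 2 * x * y ^ 2 * z) = 0)
    (k : z * (4 * x ^ 3 + y ^ 2 * z ^ 2) = 0)
    (l : z * (4 * y ^ 3 + 2 * x * y * z ^ 2) = 0) :
    x ^ 5 = 0 ∧ y ^ 5 = 0 ∧ z ^ 5 = 0 ∧ x ^ 4 * y = 0 ∧ x ^ 4 * z = 0 ∧
    x * y ^ 4 = 0 ∧ x * z ^ 4 = 0 ∧ y ^ 4 * z = 0 ∧ y * z ^ 4 = 0 := by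
  have yz3 : y * z ^ 3 = 0 := hu.mul_right_eq_zero.1 (by linear_combination 2 * h - x * l)
  have y3z : y ^ 3 * z = 0 := h4.mul_right_eq_zero.1 (by linear_combination l - 2 * x * yz3)
  have x3y : x ^ 3 * y = 0 := h4.mul_right_eq_zero.1 (by linear_combination g - z * y3z)
  have x3z : x ^ 3 * z = 0 := h4.mul_right_eq_zero.1 (by linear_combination k - y * yz3)
  have x5 : x ^ 5 = 0 := h4.mul_right_eq_zero.1 (by linear_combination 4 * xf - y * d - z * e)
  have w : x ^ 2 * y ^ 2 * z ^ 2 = 0 := h4.mul_right_eq_zero.1 (by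
    linear_combination -4 * x * a + y * d + z * e - 12 * x5)
  refine ⟨x5, ?_, ?_, ?_, ?_, ?_, ?_, ?_, ?_⟩
  · exact h3.mul_right_eq_zero.1 (by
      linear_combination -y * b + x * x3y + z * yz3 - x * z * y3z)
  · exact h3.mul_right_eq_zero.1 (by
      linear_combination -z * c + x * x3z + y * y3z - x * y * yz3)
  · linear_combination x * x3y
  · linear_combination x * x3z
  · exact h4.mul_right_eq_zero.1 (by linear_combination y * d - 2 * w)
  · exact h4.mul_right_eq_zero.1 (by linear_combination z * e - 2 * w)
  · linear_combination y * y3z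
  · linear_combination z * yz3

theorem pderiv0_f : pderiv 0 f = 4 * X 0 ^ 3 + X 1 ^ 2 * X 2 ^ 2 := by
  simp [f, pderiv_X, Derivation.leibniz_pow]
  try ring

theorem pderiv1_f : pderiv 1 f = 4 * X 1 ^ 3 + 2 * X 0 * X 1 * X 2 ^ 2 := by
  simp [f, pderiv_X, Derivation.leibniz_pow]
  try ring

theorem pderiv2_f : pderiv 2 f = 4 * X 2 ^ 3 + 2 * X 0 * X 1 ^ 2 * X 2 := by
  simp [f, pderiv_X, Derivation.leibniz_pow]
  try ring

theorem stmt_9 :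
    ι (X 0 ^ 5) ∈ J₁ ∧ ι (X 1 ^ 5) ∈ J₁ ∧ ι (X 2 ^ 5) ∈ J₁ ∧
    ι (X 0 ^ 4 * X 1) ∈ J₁ ∧ ι (X 0 ^ 4 * X 2) ∈ J₁ ∧
    ι (X 0 * X 1 ^ 4) ∈ J₁ ∧ ι (X 0 * X 2 ^ 4) ∈ J₁ ∧
    ι (X 1 ^ 4 * X 2) ∈ J₁ ∧ ι (X 1 * X 2 ^ 4) ∈ J₁ := by
  have key : ∀ p, ι p ∈ J₁ ↔ ((Ideal.Quotient.mk J₁).comp ι) p = 0 := fun p => by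
    rw [RingHom.comp_apply, Ideal.Quotient.eq_zero_iff_mem]
  have un : ∀ p : MvPolynomial (Fin 3) ℂ, constantCoeff p ≠ 0 →
      IsUnit (((Ideal.Quotient.mk J₁).comp ι) p) := fun p hp => by
    rw [RingHom.comp_apply]
    apply IsUnit.map
    rw [MvPowerSeries.isUnit_iff_constantCoeff, isUnit_iff_ne_zero]
    rw [← MvPowerSeries.coeff_zero_eq_constantCoeff_apply]
    simpa [ι, MvPolynomial.coeff_coe, ← MvPolynomial.constantCoeff_eq] using hp
  have m : ∀ p, ι p ∈ ({ ι (X 0 * f), ι (X 1 * f), ι (X 2 * f),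
      ι (f - X 0 * pderiv 0 f), ι (X 0 * pderiv 1 f), ι (X 0 * pderiv 2 f),
      ι (X 1 * pderiv 0 f), ι (f - X 1 * pderiv 1 f), ι (X 1 * pderiv 2 f),
      ι (X 2 * pderiv 0 f), ι (X 2 * pderiv 1 f), ι (f - X 2 * pderiv 2 f) } :
        Set (MvPowerSeries (Fin 3) ℂ)) → ((Ideal.Quotient.mk J₁).comp ι) p = 0 :=
    fun p hp => (key p).1 (Ideal.subset_span hp)
  have xf := m (X 0 * f) (by simp)
  have a := m (f - X 0 * pderiv 0 f) (by simp)
  have b := m (f - X 1 * pderiv 1 f) (by simp)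
  have c := m (f - X 2 * pderiv 2 f) (by simp)
  have d := m (X 0 * pderiv 1 f) (by simp)
  have e := m (X 0 * pderiv 2 f) (by simp)
  have g := m (X 1 * pderiv 0 f) (by simp)
  have h := m (X 1 * pderiv 2 f) (by simp)
  have k := m (X 2 * pderiv 0 f) (by simp)
  have l := m (X 2 * pderiv 1 f) (by simp)
  have hu := un (8 - 2 * X 0 ^ 2) (by
    have q : constantCoeff (8 : MvPolynomial (Fin 3) ℂ) = 8 := map_ofNat _ 8
    simp [q])
  have h4 := un 4 (by
    have q : constantCoeff (4 : MvPolynomial (Fin 3) ℂ) = 4 := map_ofNat _ 4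
    simp [q])
  have h3 := un 3 (by
    have q : constantCoeff (3 : MvPolynomial (Fin 3) ℂ) = 3 := map_ofNat _ 3
    simp [q])
  simp only [key]
  clear m un key
  generalize (Ideal.Quotient.mk J₁).comp ι = φ at *
  rw [pderiv0_f] at a g k
  rw [pderiv1_f] at b d l
  rw [pderiv2_f] at c e h
  simp only [f, map_add, map_sub, map_mul, map_pow, map_ofNat] at *
  exact aux_quot (φ (X 0)) (φ (X 1)) (φ (X 2)) hu h4 h3 xf (by linear_combination a)
    (by linear_combination b) (by linear_combination c) d e g h k l
end

section
/- Let f = x⁴ + y⁴ + z⁴ + x·y²·z² in ℂ[x,y,z], and let J₁ be the ideal of ℂ[[x,y,z]] generated by the images of the twelve polynomials x·f, y·f, z·f, f − x·∂f/∂x, x·∂f/∂y, x·∂f/∂z, y·∂f/∂x, f − y·∂f/∂y, y·∂f/∂z, z·∂f/∂x, z·∂f/∂y, f − z·∂f/∂z. Then the images of the monomials x³y, x³z, y³z², y²z³, x²y³, x²z³, x²y²z², x·y³z², x·y²z³ in ℂ[[x,y,z]] all belong to J₁. -/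
open MvPolynomial

theorem stmt_10 :
    ι (X 0 ^ 3 * X 1) ∈ J₁ ∧ ι (X 0 ^ 3 * X 2) ∈ J₁ ∧
    ι (X 1 ^ 3 * X 2 ^ 2) ∈ J₁ ∧ ι (X 1 ^ 2 * X 2 ^ 3) ∈ J₁ ∧
    ι (X 0 ^ 2 * X 1 ^ 3) ∈ J₁ ∧ ι (X 0 ^ 2 * X 2 ^ 3) ∈ J₁ ∧
    ι (X 0 ^ 2 * X 1 ^ 2 * X 2 ^ 2) ∈ J₁ ∧
    ι (X 0 * X 1 ^ 3 * X 2 ^ 2) ∈ J₁ ∧ ι (X 0 * X 1 ^ 2 * X 2 ^ 3) ∈ J₁ := by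
  have hx : pderiv 0 f = 4 * X 0 ^ 3 + X 1 ^ 2 * X 2 ^ 2 := by
    simp [f, pderiv_X, Derivation.leibniz, Derivation.leibniz_pow]
    ring
  have hy : pderiv 1 f = 4 * X 1 ^ 3 + 2 * X 0 * X 1 * X 2 ^ 2 := by
    simp [f, pderiv_X, Derivation.leibniz, Derivation.leibniz_pow]
    ring
  have hz : pderiv 2 f = 4 * X 2 ^ 3 + 2 * X 0 * X 1 ^ 2 * X 2 := by
    simp [f, pderiv_X, Derivation.leibniz, Derivation.leibniz_pow]
    ring
  have hA : ι (X 0 * pderiv 1 f) ∈ J₁ := Ideal.subset_span (by simp)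
  have hB : ι (X 0 * pderiv 2 f) ∈ J₁ := Ideal.subset_span (by simp)
  have hC : ι (X 1 * pderiv 0 f) ∈ J₁ := Ideal.subset_span (by simp)
  have hD : ι (X 1 * pderiv 2 f) ∈ J₁ := Ideal.subset_span (by simp)
  have hE : ι (X 2 * pderiv 0 f) ∈ J₁ := Ideal.subset_span (by simp)
  have hF : ι (X 2 * pderiv 1 f) ∈ J₁ := Ideal.subset_span (by simp)
  have hG : ι (f - X 0 * pderiv 0 f) ∈ J₁ := Ideal.subset_span (by simp)
  have hH : ι (f - X 1 * pderiv 1 f) ∈ J₁ := Ideal.subset_span (by simp)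
  -- constants are units
  have hu : ∀ (c : ℂ) (p : MvPolynomial (Fin 3) ℂ), c ≠ 0 → ι (C c * p) ∈ J₁ → ι p ∈ J₁ := by
    intro c p hc h
    have h2 := J₁.mul_mem_left (ι (C c⁻¹)) h
    rwa [← map_mul, ← mul_assoc, ← C_mul, inv_mul_cancel₀ hc, C_1, one_mul] at h2
  have h4 : ∀ p : MvPolynomial (Fin 3) ℂ, ι (4 * p) ∈ J₁ → ι p ∈ J₁ := by
    intro p h
    refine hu 4 p (by norm_num) ?_
    have : (C (4 : ℂ) : MvPolynomial (Fin 3) ℂ) = 4 := map_ofNat C 4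
    rwa [this]
  -- `4 - x²` is a unit
  have hunit : IsUnit (ι (4 - X 0 ^ 2)) := by
    rw [MvPowerSeries.isUnit_iff_constantCoeff]
    have : ι (4 - X 0 ^ 2) = 4 - (MvPowerSeries.X 0) ^ 2 := by
      rw [map_sub, map_pow, map_ofNat]
      simp [ι]
    rw [this, map_sub, map_ofNat]
    simp
  have hK : ∀ p : MvPolynomial (Fin 3) ℂ, ι ((4 - X 0 ^ 2) * p) ∈ J₁ → ι p ∈ J₁ := by
    intro p h
    rw [map_mul] at h
    exact (Ideal.unit_mul_mem_iff_mem J₁ hunit).1 h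
  have hm : ∀ p q : MvPolynomial (Fin 3) ℂ, ι q ∈ J₁ → ι (p * q) ∈ J₁ := by
    intro p q h
    rw [map_mul]
    exact J₁.mul_mem_left _ h
  have ha : ∀ p q : MvPolynomial (Fin 3) ℂ, ι p ∈ J₁ → ι q ∈ J₁ → ι (p + q) ∈ J₁ := by
    intro p q h h'
    rw [map_add]
    exact J₁.add_mem h h'
  rw [hy] at hA hF hH
  rw [hz] at hB hD
  rw [hx] at hC hE hG
  have m3 : ι (X 1 ^ 3 * X 2 ^ 2) ∈ J₁ := by
    apply hK
    apply h4
    convert ha _ _ (hm (4 * X 2) _ hF) (hm (-2 * X 0 * X 2) _ hD) using 2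
    ring
  have m4 : ι (X 1 ^ 2 * X 2 ^ 3) ∈ J₁ := by
    apply hK
    apply h4
    convert ha _ _ (hm (4 * X 1) _ hD) (hm (-2 * X 0 * X 1) _ hF) using 2
    ring
  have m1 : ι (X 0 ^ 3 * X 1) ∈ J₁ := by
    apply h4
    convert ha _ _ hC (hm (-1) _ m3) using 2
    ring
  have m2 : ι (X 0 ^ 3 * X 2) ∈ J₁ := by
    apply h4
    convert ha _ _ hE (hm (-1) _ m4) using 2
    ring
  have m5 : ι (X 0 ^ 2 * X 1 ^ 3) ∈ J₁ := by
    apply h4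
    convert ha _ _ (hm (X 0) _ hA) (hm (-2 * X 2 ^ 2) _ m1) using 2
    ring
  have m6 : ι (X 0 ^ 2 * X 2 ^ 3) ∈ J₁ := by
    apply h4
    convert ha _ _ (hm (X 0) _ hB) (hm (-2 * X 1 ^ 2) _ m2) using 2
    ring
  have m7 : ι (X 0 ^ 2 * X 1 ^ 2 * X 2 ^ 2) ∈ J₁ := by
    convert ha _ _ (ha _ _ (hm (-X 0) _ hG) (hm (-3 * X 0) _ hH))
      (ha _ _ (hm (-2 * X 1) _ hA) (hm (X 2) _ hB)) using 2
    rw [f]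
    ring
  refine ⟨m1, m2, m3, m4, m5, m6, m7, ?_, ?_⟩
  · rw [mul_assoc]
    exact hm _ _ m3
  · rw [mul_assoc]
    exact hm _ _ m4
end
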